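/- Let k ≥ 4 be an integer and let H be a 2-contractible k-tree with cross-cut number σ = σ(H). Then forb(n,H) = 2^{(σ−1+o(1))·C(n,k−1)}; precisely, for every ε > 0 there exists n₀ such that for all n ≥ n₀ one has 2^{(σ−1−ε)·C(n,k−1)} ≤ forb(n,H) ≤ 2^{(σ−1+ε)·C(n,k−1)}. -/

import Mathlib

open Finset Filter

attribute [local instance] Classical.propDecidable

/-- The vertex set `[n] = {1,…,n}`. -/
def vtx (n : ℕ) : Finset ℕ := Finset.Icc 1 n

/-- `F` is a `k`-graph on `[n]`: a family of `k`-element subsets of `[n]`. -/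
def IsKGraphOn (k n : ℕ) (F : Finset (Finset ℕ)) : Prop :=
  ∀ E ∈ F, E ⊆ vtx n ∧ E.card = k

/-- The vertex set of a hypergraph (union of its edges). -/
def vertexSet {α : Type} [DecidableEq α] (H : Finset (Finset α)) : Finset α := H.sup id

/-- The degree of a vertex: the number of edges containing it. -/
def vdeg {α : Type} [DecidableEq α] (H : Finset (Finset α)) (v : α) : ℕ :=
  (H.filter fun E => v ∈ E).card

/-- Hypertrees, defined recursively: a single edge is a hypertree, and a hypertree grows
by adding a new leaf edge `E` whose intersection with the current vertex set equals its
intersection with some existing (parent) edge `F`. -/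
inductive IsHypertree {α : Type} [DecidableEq α] : Finset (Finset α) → Prop
  | single (E : Finset α) : IsHypertree {E}
  | grow {H : Finset (Finset α)} (E F : Finset α) (hH : IsHypertree H) (hE : E ∉ H)
      (hF : F ∈ H) (hint : E ∩ vertexSet H = E ∩ F) : IsHypertree (insert E H)

/-- A `k`-tree: a `k`-uniform hypertree. -/
def IsKTree {α : Type} [DecidableEq α] (k : ℕ) (H : Finset (Finset α)) : Prop :=
  IsHypertree H ∧ ∀ E ∈ H, E.card = k

/-- A hypergraph is 2-contractible if every edge contains at least two vertices of degree 1. -/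
def TwoContractible {α : Type} [DecidableEq α] (H : Finset (Finset α)) : Prop :=
  ∀ E ∈ H, 2 ≤ (E.filter fun v => vdeg H v = 1).card

/-- `S` is a cross-cut of `H`: every edge meets `S` in exactly one vertex. -/
def IsCrosscut {α : Type} [DecidableEq α] (H : Finset (Finset α)) (S : Finset α) : Prop :=
  ∀ E ∈ H, (E ∩ S).card = 1

/-- `σ` is the cross-cut number of `H`: the minimum size of a cross-cut. -/
def IsCrosscutNumber {α : Type} [DecidableEq α] (H : Finset (Finset α)) (σ : ℕ) : Prop :=
  IsLeast {m | ∃ S : Finset α, IsCrosscut H S ∧ S.card = m} σ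

/-- A hypergraph is `ℓ`-overlapping if any two distinct edges meet in at most `ℓ` vertices. -/
def Overlapping {α : Type} [DecidableEq α] (ℓ : ℕ) (H : Finset (Finset α)) : Prop :=
  ∀ E ∈ H, ∀ F ∈ H, E ≠ F → (E ∩ F).card ≤ ℓ

/-- `K` is (the edge set of) a copy of `H`, i.e. the image of `H` under a map that is
injective on the vertex set of `H`. -/
def IsCopyOf {α : Type} [DecidableEq α] (H : Finset (Finset α)) (K : Finset (Finset ℕ)) : Prop :=
  ∃ φ : α → ℕ, Set.InjOn φ ↑(vertexSet H) ∧ K = H.image fun E => E.image φ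

/-- `F` contains no subgraph isomorphic to `H`. -/
def HFree {α : Type} [DecidableEq α] (H : Finset (Finset α)) (F : Finset (Finset ℕ)) : Prop :=
  ∀ K ⊆ F, ¬ IsCopyOf H K

/-- The collection of copies of `H` in `F` (as distinct subgraphs of `F`). -/
noncomputable def copies {α : Type} [DecidableEq α] (H : Finset (Finset α))
    (F : Finset (Finset ℕ)) : Finset (Finset (Finset ℕ)) :=
  F.powerset.filter (IsCopyOf H)

/-- The number of `H`-free `k`-graphs on the vertex set `[n]`. -/
noncomputable def forb {α : Type} [DecidableEq α] (n k : ℕ) (H : Finset (Finset α)) : ℕ :=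
  (((vtx n).powersetCard k).powerset.filter (HFree H)).card

/-- `H` is a `k`-uniform linear cycle of length `ℓ`. -/
def IsLinearCycle {α : Type} [DecidableEq α] (k ℓ : ℕ) (H : Finset (Finset α)) : Prop :=
  ∃ E : ℕ → Finset α,
    (∀ i < ℓ, (E i).card = k) ∧
    (∀ i < ℓ, ∀ j < ℓ, i ≠ j → E i ≠ E j) ∧
    (∀ i < ℓ, (E i ∩ E ((i + 1) % ℓ)).card = 1) ∧
    (∀ i < ℓ, ∀ j < ℓ, i ≠ j → E i ∩ E ((i + 1) % ℓ) ≠ E j ∩ E ((j + 1) % ℓ)) ∧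
    (∀ i < ℓ, ∀ j < ℓ, i ≠ j → (i + 1) % ℓ ≠ j → (j + 1) % ℓ ≠ i → Disjoint (E i) (E j)) ∧
    H = (Finset.range ℓ).image E

/-- `(X 0, …, X (k-1))` is a `k`-partition of `F`. -/
def IsKPartition (k : ℕ) (F : Finset (Finset ℕ)) (X : Fin k → Finset ℕ) : Prop :=
  (∀ i j, i ≠ j → Disjoint (X i) (X j)) ∧ ∀ E ∈ F, ∀ i, (E ∩ X i).card = 1

/-- The `J`-projection of an edge. -/
def projJ {k : ℕ} (X : Fin k → Finset ℕ) (J : Finset (Fin k)) (E : Finset ℕ) : Finset ℕ :=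
  E ∩ J.sup X

/-- The pattern of a vertex set. -/
def pattern {k : ℕ} (X : Fin k → Finset ℕ) (D : Finset ℕ) : Finset (Fin k) :=
  Finset.univ.filter fun i => (D ∩ X i).Nonempty

/-- `MI(F)`: the patterns of intersections of pairs of distinct edges. -/
noncomputable def MI {k : ℕ} (F : Finset (Finset ℕ)) (X : Fin k → Finset ℕ) :
    Finset (Finset (Fin k)) :=
  ((F ×ˢ F).filter fun p => p.1 ≠ p.2).image fun p => pattern X (p.1 ∩ p.2)

/-- The link of a vertex set `D` in `F`. -/
def link {α : Type} [DecidableEq α] (F : Finset (Finset α)) (D : Finset α) :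
    Finset (Finset α) :=
  (F.filter fun E => D ⊆ E).image fun E => E \ D

/-- The degree of a vertex set `D` in `F`: the size of its link. -/
def setDeg {α : Type} [DecidableEq α] (F : Finset (Finset α)) (D : Finset α) : ℕ :=
  (link F D).card

/-- A nonempty hypergraph is `s`-diverse if every vertex has degree less than `|H|/s`. -/
def SDiverse {α : Type} [DecidableEq α] (s : ℕ) (H : Finset (Finset α)) : Prop :=
  H.Nonempty ∧ ∀ v : α, s * vdeg H v < H.card

/-- `D` is `s`-strong in `F` if its link is `s`-diverse. -/
def SStrong {α : Type} [DecidableEq α] (s : ℕ) (F : Finset (Finset α)) (D : Finset α) : Prop :=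
  SDiverse s (link F D)

/-- `F`, with `k`-partition `X`, is `s`-super-homogeneous: for every `J ∈ MI(F)` and every
edge `E ∈ F`, the projection `E_J` is `s`-strong and `d_F(E_J) ≥ max{s, |F|/(2k·n^|J|)}`. -/
def SuperHomogeneous (n k s : ℕ) (F : Finset (Finset ℕ)) (X : Fin k → Finset ℕ) : Prop :=
  ∀ J ∈ MI F X, ∀ E ∈ F,
    SStrong s F (projJ X J E) ∧
    s ≤ setDeg F (projJ X J E) ∧
    (F.card : ℝ) / (2 * k * (n : ℝ) ^ J.card) ≤ (setDeg F (projJ X J E) : ℝ)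

/-- The rank of a family of subsets of `[k]`: the minimum size of a set `D ⊆ [k]` contained
in no member of the family. -/
noncomputable def rankFam (k : ℕ) (𝒥 : Finset (Finset (Fin k))) : ℕ :=
  sInf {d | ∃ D : Finset (Fin k), D.card = d ∧ ∀ J ∈ 𝒥, ¬ D ⊆ J}

/-- A family of subsets of `[k]` is of type 1 if it contains the full power set of some
`(k-2)`-set `B`. -/
def TypeOne (k : ℕ) (𝒥 : Finset (Finset (Fin k))) : Prop :=
  ∃ B : Finset (Fin k), B.card = k - 2 ∧ ∀ S ⊆ B, S ∈ 𝒥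

/-- The constant `c(k,s) = k!/(k^k·(2s(1+2^k))^(2^k))`. -/
noncomputable def cks (k s : ℕ) : ℝ :=
  (Nat.factorial k : ℝ) / ((k : ℝ) ^ k * (2 * (s : ℝ) * (1 + 2 ^ k)) ^ (2 ^ k))

/-- Degree of a set of vertices in a (uniform) hypergraph `K`: number of edges containing it. -/
def uDeg {α : Type} [DecidableEq α] (K : Finset (Finset α)) (S : Finset α) : ℕ :=
  (K.filter fun e => S ⊆ e).card

/-- A `t`-uniform hypergraph is `d`-graded if `d_K(S) ≤ d^(t-|S|)` for all `S` with
`1 ≤ |S| ≤ t`. -/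
def Graded {α : Type} [DecidableEq α] (t : ℕ) (d : ℝ) (K : Finset (Finset α)) : Prop :=
  ∀ S : Finset α, 1 ≤ S.card → S.card ≤ t → (uDeg K S : ℝ) ≤ d ^ (t - S.card)

/-- `S` is saturated by `K`: `d_K(S) = ⌊d^(t-|S|)⌋`. -/
def Saturated {α : Type} [DecidableEq α] (t : ℕ) (d : ℝ) (K : Finset (Finset α))
    (S : Finset α) : Prop :=
  uDeg K S = ⌊d ^ (t - S.card)⌋₊

/-- `S` is admissible: no nonempty subset of `S` is saturated. -/
def Admissible {α : Type} [DecidableEq α] (t : ℕ) (d : ℝ) (K : Finset (Finset α))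
    (S : Finset α) : Prop :=
  ∀ S' ⊆ S, S'.Nonempty → ¬ Saturated t d K S'

/-- `Z_K(S)`: the vertices `v` such that `S ∪ {v}` is inadmissible and `{v}` is not
saturated. -/
noncomputable def Zset {α : Type} [DecidableEq α] (t : ℕ) (d : ℝ) (K : Finset (Finset α))
    (S : Finset α) : Finset α :=
  (vertexSet K).filter fun v => ¬ Admissible t d K (insert v S) ∧ ¬ Saturated t d K {v}

/-- `ex(G,H)`: the maximum number of edges of an `H`-free subgraph of `G`. -/
noncomputable def exIn {α : Type} [DecidableEq α] (H : Finset (Finset α))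
    (G : Finset (Finset ℕ)) : ℕ :=
  (G.powerset.filter (HFree H)).sup Finset.card

/-- The probability, in the random `k`-graph `G^(k)(n,p)` (each `k`-subset of `[n]` is an
edge independently with probability `p`), of the event `A`. -/
noncomputable def probEvent (k n : ℕ) (p : ℝ) (A : Finset (Finset ℕ) → Prop) : ℝ :=
  ∑ G ∈ ((vtx n).powersetCard k).powerset.filter A,
    p ^ G.card * (1 - p) ^ (((vtx n).powersetCard k).card - G.card)

/-! ### Basic tools -/

theorem mem_vertexSet' {α : Type} [DecidableEq α] (H : Finset (Finset α)) (v : α) :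
    v ∈ vertexSet H ↔ ∃ E ∈ H, v ∈ E := by
  simp [vertexSet, Finset.mem_sup]

/-- Every facet of every member has codegree at least `s` inside the family. -/
def Core (s : ℕ) (G : Finset (Finset ℕ)) : Prop :=
  ∀ E ∈ G, ∀ x ∈ E, s ≤ uDeg G (E.erase x)

/-- `T` can be extended to an edge of `F` avoiding any prescribed set of fewer than `s` vertices. -/
def Good (s : ℕ) (F : Finset (Finset ℕ)) (T : Finset ℕ) : Prop :=
  ∀ W : Finset ℕ, W.card < s → ∃ G ∈ F, T ⊆ G ∧ Disjoint (G \ T) W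

theorem good_of_uDeg (s : ℕ) (F : Finset (Finset ℕ)) (T : Finset ℕ)
    (hu : ∀ E ∈ F, E.card = T.card + 1) (hs : s ≤ uDeg F T) : Good s F T := by
  intro W hW
  by_contra hcon
  push Not at hcon
  have hsub : F.filter (fun e => T ⊆ e) ⊆ W.image (fun y => insert y T) := by
    intro G hG
    rw [Finset.mem_filter] at hG
    obtain ⟨hGF, hTG⟩ := hG
    have h1 := hcon G hGF hTG
    rw [Finset.not_disjoint_iff] at h1
    obtain ⟨y, hy, hyW⟩ := h1
    rw [Finset.mem_sdiff] at hy
    rw [Finset.mem_image]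
    refine ⟨y, hyW, ?_⟩
    apply Finset.eq_of_subset_of_card_le
    · exact Finset.insert_subset hy.1 hTG
    · rw [Finset.card_insert_of_notMem hy.2, hu G hGF]
  have := (Finset.card_le_card hsub).trans Finset.card_image_le
  unfold uDeg at hs
  omega

theorem core_avoid (r s : ℕ) (G : Finset (Finset ℕ)) (hu : ∀ E ∈ G, E.card = r)
    (hc : Core s G) (J W : Finset ℕ) (hW : W.card < s) :
    ∀ m : ℕ, ∀ G0 ∈ G, J ⊆ G0 → ((G0 \ J) ∩ W).card ≤ m →
      ∃ G1 ∈ G, J ⊆ G1 ∧ Disjoint (G1 \ J) W := by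
  intro m
  induction m with
  | zero =>
    intro G0 h0 hJ hm
    refine ⟨G0, h0, hJ, ?_⟩
    rw [Finset.disjoint_iff_inter_eq_empty]
    exact Finset.card_eq_zero.mp (Nat.le_zero.mp hm)
  | succ m ih =>
    intro G0 h0 hJ hm
    by_cases hd : Disjoint (G0 \ J) W
    · exact ⟨G0, h0, hJ, hd⟩
    rw [Finset.not_disjoint_iff] at hd
    obtain ⟨x, hx, hxW⟩ := hd
    rw [Finset.mem_sdiff] at hx
    have hcard : (G0.erase x).card + 1 = r := by
      rw [Finset.card_erase_add_one hx.1, hu G0 h0]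
    obtain ⟨G1, h1, hT, hdis⟩ := good_of_uDeg s G (G0.erase x)
      (fun E hE => by rw [hu E hE, hcard]) (hc G0 h0 x hx.1) W hW
    refine ih G1 h1 ?_ ?_
    · intro j hj
      apply hT
      rw [Finset.mem_erase]
      exact ⟨fun h => hx.2 (h ▸ hj), hJ hj⟩
    · have hss : (G1 \ J) ∩ W ⊆ ((G0 \ J) ∩ W).erase x := by
        intro y hy
        rw [Finset.mem_inter, Finset.mem_sdiff] at hy
        have hyT : y ∈ G0.erase x := by
          by_contra hn
          exact (Finset.disjoint_left.mp hdis) (Finset.mem_sdiff.mpr ⟨hy.1.1, hn⟩) hy.2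
        rw [Finset.mem_erase] at hyT
        simp only [Finset.mem_erase, Finset.mem_inter, Finset.mem_sdiff]
        exact ⟨hyT.1, ⟨hyT.2, hy.1.2⟩, hy.2⟩
      have hxm : x ∈ (G0 \ J) ∩ W := by
        simp only [Finset.mem_inter, Finset.mem_sdiff]; exact ⟨hx, hxW⟩
      have := Finset.card_le_card hss
      rw [Finset.card_erase_of_mem hxm] at this
      omega

/-- Peeling a family without a core. -/
theorem peel (r s : ℕ) : ∀ (m : ℕ) (G : Finset (Finset ℕ)), G.card ≤ m →
    (∀ E ∈ G, E.card = r) → (∀ G' ⊆ G, Core s G' → G' = ∅) →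
    ∃ D : Finset ℕ → Finset ℕ, (∀ E ∈ G, ∃ x ∈ E, D E = E.erase x) ∧
      ∀ T, (G.filter (fun E => D E = T)).card ≤ s := by
  intro m
  induction m with
  | zero =>
    intro G hG _ _
    have : G = ∅ := Finset.card_eq_zero.mp (Nat.le_zero.mp hG)
    subst this
    exact ⟨id, by simp, by simp⟩
  | succ m ih =>
    intro G hG hu hc
    by_cases hne : G = ∅
    · subst hne
      exact ⟨id, by simp, by simp⟩
    have hnc : ¬ Core s G := fun h => hne (hc G (Finset.Subset.refl _) h)
    unfold Core at hnc
    push Not at hnc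
    obtain ⟨E0, hE0, x0, hx0, hlt⟩ := hnc
    set T0 := E0.erase x0 with hT0
    have hT0c : T0.card + 1 = r := by rw [hT0, Finset.card_erase_add_one hx0, hu E0 hE0]
    have hsubG : G.filter (fun e => ¬ T0 ⊆ e) ⊆ G := Finset.filter_subset _ _
    have hE0n : E0 ∉ G.filter (fun e => ¬ T0 ⊆ e) := by
      rw [Finset.mem_filter]
      intro h
      exact h.2 (Finset.erase_subset _ _)
    have hss : G.filter (fun e => ¬ T0 ⊆ e) ⊂ G :=
      Finset.ssubset_iff_subset_ne.mpr ⟨hsubG, fun h => hE0n (h.symm ▸ hE0)⟩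
    have hcl := Finset.card_lt_card hss
    obtain ⟨D1, hD1, hD1f⟩ := ih (G.filter (fun e => ¬ T0 ⊆ e)) (by omega)
      (fun E hE => hu E (hsubG hE)) (fun G' hG' => hc G' (hG'.trans hsubG))
    refine ⟨fun E => if T0 ⊆ E then T0 else D1 E, ?_, ?_⟩
    · intro E hE
      by_cases h : T0 ⊆ E
      · simp only [h, if_true]
        have hlt2 : T0.card < E.card := by rw [hu E hE]; omega
        obtain ⟨y, hy, hyT⟩ := Finset.exists_mem_notMem_of_card_lt_card hlt2
        refine ⟨y, hy, ?_⟩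
        apply Finset.eq_of_subset_of_card_le
        · intro z hz
          rw [Finset.mem_erase]
          exact ⟨fun hh => hyT (hh ▸ hz), h hz⟩
        · rw [Finset.card_erase_of_mem hy, hu E hE]; omega
      · simp only [h, if_false]
        exact hD1 E (Finset.mem_filter.mpr ⟨hE, h⟩)
    · intro T
      by_cases hT : T = T0
      · refine le_trans (Finset.card_le_card ?_) hlt.le
        intro E hE
        rw [Finset.mem_filter] at hE ⊢
        refine ⟨hE.1, ?_⟩
        by_contra h
        have h2 := hE.2
        simp only [h, if_false] at h2
        obtain ⟨x, hx, hx2⟩ := hD1 E (Finset.mem_filter.mpr ⟨hE.1, h⟩)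
        apply h
        rw [← hT, ← h2, hx2]
        exact Finset.erase_subset _ _
      · refine le_trans (Finset.card_le_card ?_) (hD1f T)
        intro E hE
        rw [Finset.mem_filter] at hE
        rw [Finset.mem_filter, Finset.mem_filter]
        by_cases h : T0 ⊆ E
        · have h2 := hE.2
          simp only [h, if_true] at h2
          exact absurd h2.symm hT
        · have h2 := hE.2
          simp only [h, if_false] at h2
          exact ⟨⟨hE.1, h⟩, h2⟩

/-- Extending a partial injection by a bijection onto prescribed new values. -/
theorem extend_map {α : Type} [DecidableEq α] (φ : α → ℕ) (X Y : Finset α) (Z : Finset ℕ)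
    (hinj : Set.InjOn φ ↑X) (hXY : Disjoint X Y) (hc : Y.card = Z.card)
    (hZ : ∀ z ∈ Z, ∀ x ∈ X, φ x ≠ z) :
    ∃ ψ : α → ℕ, (∀ x, x ∉ Y → ψ x = φ x) ∧ Set.InjOn ψ ↑(X ∪ Y) ∧ Y.image ψ = Z := by
  obtain ⟨e⟩ : Nonempty (Y ≃ Z) := ⟨Finset.equivOfCardEq hc⟩
  let ψ : α → ℕ := fun x => if h : x ∈ Y then (e ⟨x, h⟩ : ℕ) else φ x
  have hin : ∀ x (h : x ∈ Y), ψ x = (e ⟨x, h⟩ : ℕ) := fun x h => by simp [ψ, h]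
  have hout : ∀ x, x ∉ Y → ψ x = φ x := fun x h => by simp [ψ, h]
  have hX : ∀ x ∈ X, x ∉ Y := fun x hx => Finset.disjoint_left.mp hXY hx
  refine ⟨ψ, hout, ?_, ?_⟩
  · intro a ha b hb hab
    rw [Finset.mem_coe, Finset.mem_union] at ha hb
    by_cases hay : a ∈ Y
    · by_cases hby : b ∈ Y
      · rw [hin a hay, hin b hby] at hab
        have := e.injective (Subtype.ext hab)
        simpa using this
      · have hbX : b ∈ X := hb.resolve_right hby
        rw [hin a hay, hout b hby] at hab
        exact absurd hab.symm (hZ _ (e ⟨a, hay⟩).2 b hbX)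
    · have haX : a ∈ X := ha.resolve_right hay
      by_cases hby : b ∈ Y
      · rw [hin b hby, hout a hay] at hab
        exact absurd hab (hZ _ (e ⟨b, hby⟩).2 a haX)
      · have hbX : b ∈ X := hb.resolve_right hby
        rw [hout a hay, hout b hby] at hab
        exact hinj haX hbX hab
  · ext z
    rw [Finset.mem_image]
    constructor
    · rintro ⟨y, hy, rfl⟩
      rw [hin y hy]
      exact (e ⟨y, hy⟩).2
    · intro hz
      refine ⟨e.symm ⟨z, hz⟩, (e.symm ⟨z, hz⟩).2, ?_⟩
      rw [hin _ (e.symm ⟨z, hz⟩).2]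
      simp

/-- Embedding the trace of a hypertree on `X` into a core. -/
theorem embed_core {α : Type} [DecidableEq α] (r s : ℕ) (G : Finset (Finset ℕ))
    (hu : ∀ E ∈ G, E.card = r) (hc : Core s G) (hne : G.Nonempty)
    (X : Finset α) (hX : X.card < s)
    (H : Finset (Finset α)) (hH : IsHypertree H) (hr : ∀ E ∈ H, (E ∩ X).card = r) :
    ∃ φ : α → ℕ, Set.InjOn φ ↑(vertexSet H ∩ X) ∧ ∀ E ∈ H, (E ∩ X).image φ ∈ G := by
  induction hH with
  | single E =>
    obtain ⟨G0, h0⟩ := hne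
    obtain ⟨ψ, -, h2, h3⟩ := extend_map (fun _ : α => 0) ∅ (E ∩ X) G0 (by simp) (by simp)
      (by rw [hr E (by simp), hu G0 h0]) (by simp)
    refine ⟨ψ, ?_, ?_⟩
    · refine h2.mono ?_
      intro v hv
      simpa [vertexSet] using hv
    · intro E' hE'
      rw [Finset.mem_singleton] at hE'
      subst hE'
      rw [h3]; exact h0
  | @grow H E F hH hE hF hcap ih =>
    obtain ⟨φ, hinj, him⟩ := ih (fun E' hE' => hr E' (Finset.mem_insert_of_mem hE'))
    have hG0 := him F hF
    set V := vertexSet H ∩ X with hV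
    set J := ((E ∩ F) ∩ X).image φ with hJ
    have hEF : (E ∩ F) ∩ X ⊆ V := by
      intro v hv
      simp only [Finset.mem_inter] at hv
      rw [hV, Finset.mem_inter, mem_vertexSet']
      exact ⟨⟨F, hF, hv.1.2⟩, hv.2⟩
    have hJsub : J ⊆ (F ∩ X).image φ := by
      apply Finset.image_subset_image
      intro v hv
      simp only [Finset.mem_inter] at hv ⊢
      exact ⟨hv.1.2, hv.2⟩
    have hWc : (V.image φ).card < s :=
      lt_of_le_of_lt (Finset.card_image_le.trans (Finset.card_le_card Finset.inter_subset_right)) hX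
    obtain ⟨G1, h1, hJ1, hd1⟩ := core_avoid r s G hu hc J (V.image φ) hWc _ _ hG0 hJsub le_rfl
    have hJc : J.card = ((E ∩ F) ∩ X).card :=
      Finset.card_image_of_injOn (hinj.mono (by exact_mod_cast hEF))
    have hsplit : (E ∩ X) = ((E ∩ F) ∩ X) ∪ ((E ∩ X) \ V) := by
      ext v
      have := Finset.ext_iff.mp hcap v
      simp only [Finset.mem_inter, Finset.mem_union, Finset.mem_sdiff, hV] at this ⊢
      tauto
    have hdisj : Disjoint ((E ∩ F) ∩ X) ((E ∩ X) \ V) := by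
      rw [Finset.disjoint_left]
      intro v hv hv2
      exact (Finset.mem_sdiff.mp hv2).2 (hEF hv)
    have hcards : ((E ∩ X) \ V).card = (G1 \ J).card := by
      have e1 : (E ∩ X).card = ((E ∩ F) ∩ X).card + ((E ∩ X) \ V).card := by
        conv_lhs => rw [hsplit]
        exact Finset.card_union_of_disjoint hdisj
      have e2 := hr E (Finset.mem_insert_self _ _)
      have e3 := hu G1 h1
      rw [Finset.card_sdiff_of_subset hJ1]
      omega
    obtain ⟨ψ, hψ1, hψ2, hψ3⟩ := extend_map φ V ((E ∩ X) \ V) (G1 \ J) hinj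
      Finset.disjoint_sdiff hcards (by
        intro z hz x hx hxz
        exact (Finset.disjoint_left.mp hd1) hz (hxz ▸ Finset.mem_image_of_mem φ hx))
    have hψV : ∀ x ∈ V, ψ x = φ x := fun x hx => hψ1 x (by simp [hx])
    refine ⟨ψ, ?_, ?_⟩
    · refine hψ2.mono ?_
      intro v hv
      simp only [Finset.coe_inter, Set.mem_inter_iff, Finset.mem_coe, mem_vertexSet',
        Finset.mem_insert] at hv
      obtain ⟨⟨E', hE' | hE', hvE⟩, hvX⟩ := hv
      · subst hE'
        by_cases hvV : v ∈ V
        · simp [hvV]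
        · simp [hvV, hvE, hvX]
      · have : v ∈ V := by
          rw [hV, Finset.mem_inter, mem_vertexSet']; exact ⟨⟨E', hE', hvE⟩, hvX⟩
        simp [this]
    · intro E' hE'
      rw [Finset.mem_insert] at hE'
      rcases hE' with hE' | hE'
      · subst hE'
        have : (E' ∩ X).image ψ = G1 := by
          rw [hsplit, Finset.image_union, hψ3]
          have : ((E' ∩ F) ∩ X).image ψ = J := by
            apply Finset.image_congr
            intro v hv
            exact hψV v (hEF hv)
          rw [this]
          exact Finset.union_sdiff_of_subset hJ1
        rw [this]; exact h1
      · have : (E' ∩ X).image ψ = (E' ∩ X).image φ := by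
          apply Finset.image_congr
          intro v hv
          apply hψV
          rw [Finset.mem_coe, Finset.mem_inter] at hv
          rw [hV, Finset.mem_inter, mem_vertexSet']
          exact ⟨⟨E', hE', hv.1⟩, hv.2⟩
        rw [this]; exact him E' hE'

/-- Completing a partial embedding edge by edge. -/
theorem complete_embed {α : Type} [DecidableEq α] (k s : ℕ) (F : Finset (Finset ℕ))
    (hu : ∀ E ∈ F, E.card = k) (H : Finset (Finset α)) (hk : ∀ E ∈ H, E.card = k)
    (hs : (vertexSet H).card < s)
    (X : Finset α) (hX : X ⊆ vertexSet H) (φ : α → ℕ) (hinj : Set.InjOn φ ↑X)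
    (hdis : ∀ E ∈ H, ∀ E' ∈ H, E ≠ E' → E ∩ E' ⊆ X)
    (hgood : ∀ E ∈ H, Good s F ((E ∩ X).image φ)) : ¬ HFree H F := by
  have key : ∀ H0 ⊆ H, ∃ ψ : α → ℕ, Set.InjOn ψ ↑(X ∪ vertexSet H0) ∧
      (∀ x ∈ X, ψ x = φ x) ∧ ∀ E ∈ H0, E.image ψ ∈ F := by
    intro H0
    induction H0 using Finset.induction_on with
    | empty =>
      intro _
      exact ⟨φ, by simpa [vertexSet] using hinj, fun _ _ => rfl, by simp⟩
    | insert E H0 hE ih =>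
      intro hsub
      obtain ⟨ψ, hψi, hψX, hψF⟩ := ih (fun E' h => hsub (Finset.mem_insert_of_mem h))
      have hEH : E ∈ H := hsub (Finset.mem_insert_self _ _)
      set V := X ∪ vertexSet H0 with hV
      have hVsub : V ⊆ vertexSet H := by
        intro v hv
        rw [hV, Finset.mem_union] at hv
        rcases hv with hv | hv
        · exact hX hv
        · rw [mem_vertexSet'] at hv ⊢
          obtain ⟨E', h1, h2⟩ := hv
          exact ⟨E', hsub (Finset.mem_insert_of_mem h1), h2⟩
      obtain ⟨G, hGF, hTG, hd⟩ := hgood E hEH (V.image ψ)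
        (lt_of_le_of_lt (Finset.card_image_le.trans (Finset.card_le_card hVsub)) hs)
      have hEV : ∀ v ∈ E, v ∈ V → v ∈ X := by
        intro v hv hvV
        rw [hV, Finset.mem_union, mem_vertexSet'] at hvV
        rcases hvV with h | ⟨E', h1, h2⟩
        · exact h
        · exact hdis E hEH E' (hsub (Finset.mem_insert_of_mem h1))
            (fun h => hE (h ▸ h1)) (Finset.mem_inter.mpr ⟨hv, h2⟩)
      have hc : (E \ X).card = (G \ (E ∩ X).image φ).card := by
        rw [Finset.card_sdiff_of_subset hTG, hu G hGF, Finset.card_image_of_injOn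
          (hinj.mono (by simp)), Finset.card_sdiff, hk E hEH, Finset.inter_comm]
      obtain ⟨χ, hχ1, hχ2, hχ3⟩ := extend_map ψ V (E \ X) (G \ (E ∩ X).image φ) hψi
        (by
          rw [Finset.disjoint_left]
          intro v hv hv2
          rw [Finset.mem_sdiff] at hv2
          exact hv2.2 (hEV v hv2.1 hv)) hc
        (by
          intro z hz x hx hxz
          exact (Finset.disjoint_left.mp hd) hz (hxz ▸ Finset.mem_image_of_mem ψ hx))
      have hχV : ∀ v ∈ V, χ v = ψ v := by
        intro v hv
        apply hχ1
        rw [Finset.mem_sdiff]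
        exact fun h => h.2 (hEV v h.1 hv)
      have hXV : X ⊆ V := Finset.subset_union_left
      refine ⟨χ, ?_, ?_, ?_⟩
      · refine hχ2.mono ?_
        intro v hv
        rw [Finset.mem_coe, Finset.mem_union, mem_vertexSet'] at hv
        rw [Finset.mem_coe, Finset.mem_union]
        rcases hv with hv | ⟨E', hE', hv⟩
        · exact Or.inl (hXV hv)
        · rw [Finset.mem_insert] at hE'
          rcases hE' with rfl | hE'
          · by_cases hvX : v ∈ X
            · exact Or.inl (hXV hvX)
            · exact Or.inr (Finset.mem_sdiff.mpr ⟨hv, hvX⟩)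
          · left
            rw [hV, Finset.mem_union, mem_vertexSet']
            exact Or.inr ⟨E', hE', hv⟩
      · intro x hx
        rw [hχV x (hXV hx), hψX x hx]
      · intro E' hE'
        rw [Finset.mem_insert] at hE'
        rcases hE' with rfl | hE'
        · have h1 : E'.image χ = G := by
            have : E' = (E' ∩ X) ∪ (E' \ X) := by
              ext v; simp only [Finset.mem_union, Finset.mem_inter, Finset.mem_sdiff]; tauto
            conv_lhs => rw [this]
            rw [Finset.image_union, hχ3]
            have h2 : (E' ∩ X).image χ = (E' ∩ X).image φ := by
              apply Finset.image_congr
              intro v hv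
              rw [Finset.mem_coe, Finset.mem_inter] at hv
              show χ v = φ v
              rw [hχV v (hXV hv.2), hψX v hv.2]
            rw [h2]
            exact Finset.union_sdiff_of_subset hTG
          rw [h1]; exact hGF
        · have h1 : E'.image χ = E'.image ψ := by
            apply Finset.image_congr
            intro v hv
            apply hχV
            rw [hV, Finset.mem_union, mem_vertexSet']
            exact Or.inr ⟨E', hE', hv⟩
          rw [h1]; exact hψF E' hE'
  obtain ⟨ψ, h1, -, h3⟩ := key H (Finset.Subset.refl _)
  intro hfree
  refine hfree (H.image fun E => E.image ψ) ?_ ⟨ψ, h1.mono (by simp), rfl⟩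
  intro K hK
  rw [Finset.mem_image] at hK
  obtain ⟨E, hE, rfl⟩ := hK
  exact h3 E hE

theorem eq_of_vdeg_one {α : Type} [DecidableEq α] (H : Finset (Finset α)) (v : α)
    (hv : vdeg H v = 1) (E E' : Finset α) (hE : E ∈ H) (hE' : E' ∈ H) (h : v ∈ E) (h' : v ∈ E') :
    E = E' := by
  unfold vdeg at hv
  obtain ⟨a, ha⟩ := Finset.card_eq_one.mp hv
  have h1 : E ∈ H.filter (fun E => v ∈ E) := Finset.mem_filter.mpr ⟨hE, h⟩
  have h2 : E' ∈ H.filter (fun E => v ∈ E) := Finset.mem_filter.mpr ⟨hE', h'⟩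
  rw [ha, Finset.mem_singleton] at h1 h2
  rw [h1, h2]

theorem subset_vertexSet {α : Type} [DecidableEq α] (H : Finset (Finset α)) (E : Finset α)
    (hE : E ∈ H) : E ⊆ vertexSet H := by
  intro v hv
  rw [mem_vertexSet']
  exact ⟨E, hE, hv⟩

theorem nocore1 {α : Type} [DecidableEq α] (k s : ℕ) (H : Finset (Finset α)) (hH : IsKTree k H)
    (hs : (vertexSet H).card < s) (F : Finset (Finset ℕ)) (hu : ∀ E ∈ F, E.card = k)
    (hF : HFree H F) : ∀ G' ⊆ F, Core s G' → G' = ∅ := by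
  intro G' hG' hc
  by_contra hne
  have hX : ∀ E ∈ H, E ∩ vertexSet H = E := fun E hE =>
    Finset.inter_eq_left.mpr (subset_vertexSet H E hE)
  obtain ⟨φ, h1, h2⟩ := embed_core k s G' (fun E hE => hu E (hG' hE)) hc
    (Finset.nonempty_iff_ne_empty.mpr hne) (vertexSet H) hs H hH.1
    (fun E hE => by rw [hX E hE]; exact hH.2 E hE)
  refine complete_embed k s F hu H hH.2 hs (vertexSet H) (Finset.Subset.refl _) φ
    (by simpa using h1) ?_ ?_ hF
  · intro E hE E' _ _
    exact Finset.inter_subset_left.trans (subset_vertexSet H E hE)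
  · intro E hE W _
    exact ⟨_, hG' (h2 E hE), Finset.Subset.refl _, by simp⟩

theorem nocore2 {α : Type} [DecidableEq α] (k s : ℕ) (H : Finset (Finset α)) (hH : IsKTree k H)
    (h2 : TwoContractible H)
    (hs : (vertexSet H).card < s) (F : Finset (Finset ℕ)) (hu : ∀ E ∈ F, E.card = k)
    (hF : HFree H F) (G' : Finset (Finset ℕ)) (hG' : ∀ T ∈ G', T.card = k - 2 ∧ Good s F T)
    (hc : Core s G') : G' = ∅ := by
  by_contra hne
  have hP : ∀ E : Finset α, ∃ P : Finset α, E ∈ H →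
      P ⊆ E.filter (fun v => vdeg H v = 1) ∧ P.card = 2 := by
    intro E
    by_cases hE : E ∈ H
    · obtain ⟨P, h, h'⟩ := Finset.exists_subset_card_eq (h2 E hE)
      exact ⟨P, fun _ => ⟨h, h'⟩⟩
    · exact ⟨∅, fun h => absurd h hE⟩
  choose P hP using hP
  set X := vertexSet H \ H.biUnion P with hXdef
  have hXV : X ⊆ vertexSet H := Finset.sdiff_subset
  have hEX : ∀ E ∈ H, E ∩ X = E \ P E := by
    intro E hE
    ext v
    simp only [hXdef, Finset.mem_inter, Finset.mem_sdiff, Finset.mem_biUnion]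
    constructor
    · rintro ⟨h, _, h3⟩
      exact ⟨h, fun hh => h3 ⟨E, hE, hh⟩⟩
    · rintro ⟨h, h3⟩
      refine ⟨h, subset_vertexSet H E hE h, ?_⟩
      rintro ⟨E', hE', hv⟩
      have := (hP E' hE').1 hv
      rw [Finset.mem_filter] at this
      have he := eq_of_vdeg_one H v this.2 E E' hE hE' h this.1
      exact h3 (he ▸ hv)
  have hPE : ∀ E ∈ H, P E ⊆ E := fun E hE => (hP E hE).1.trans (Finset.filter_subset _ _)
  obtain ⟨φ, h3, h4⟩ := embed_core (k - 2) s G' (fun E hE => (hG' E hE).1) hc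
    (Finset.nonempty_iff_ne_empty.mpr hne) X
    (lt_of_le_of_lt (Finset.card_le_card hXV) hs) H hH.1
    (fun E hE => by
      rw [hEX E hE, Finset.card_sdiff_of_subset (hPE E hE), hH.2 E hE, (hP E hE).2])
  refine complete_embed k s F hu H hH.2 hs X hXV φ
    (h3.mono (by simp [Finset.inter_eq_right.mpr hXV])) ?_ ?_ hF
  · intro E hE E' hE' hEE v hv
    rw [Finset.mem_inter] at hv
    have : v ∈ E ∩ X := by
      rw [hEX E hE, Finset.mem_sdiff]
      refine ⟨hv.1, fun h => ?_⟩
      have := (hP E hE).1 h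
      rw [Finset.mem_filter] at this
      exact hEE (eq_of_vdeg_one H v this.2 E E' hE hE' hv.1 hv.2)
    exact (Finset.mem_inter.mp this).2
  · intro E hE
    exact (hG' _ (h4 E hE)).2

theorem nocore3 {α : Type} [DecidableEq α] (k s : ℕ) (hk : 1 ≤ k) (H : Finset (Finset α))
    (hH : IsKTree k H) (h2 : TwoContractible H)
    (hs : (vertexSet H).card < s) (S : Finset α) (hS : IsCrosscut H S)
    (F : Finset (Finset ℕ)) (hu : ∀ E ∈ F, E.card = k)
    (hF : HFree H F) (A : Finset ℕ) (hA : S.card = A.card) (G' : Finset (Finset ℕ))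
    (hG' : ∀ D ∈ G', D.card = k - 1 ∧ Disjoint D A ∧
      ∀ v ∈ A, ∀ u ∈ D, s ≤ uDeg F (insert v (D.erase u)))
    (hc : Core s G') : G' = ∅ := by
  by_contra hne
  set X := vertexSet H \ S with hXdef
  have hXV : X ⊆ vertexSet H := Finset.sdiff_subset
  have hEX : ∀ E ∈ H, E ∩ X = E \ S := by
    intro E hE
    ext v
    simp only [hXdef, Finset.mem_inter, Finset.mem_sdiff]
    have := @subset_vertexSet _ _ H E hE v
    tauto
  obtain ⟨φ, h3, h4⟩ := embed_core (k - 1) s G' (fun E hE => (hG' E hE).1) hc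
    (Finset.nonempty_iff_ne_empty.mpr hne) X
    (lt_of_le_of_lt (Finset.card_le_card hXV) hs) H hH.1
    (fun E hE => by
      have := hS E hE
      rw [hEX E hE, Finset.card_sdiff, hH.2 E hE, Finset.inter_comm, this])
  have h3' : Set.InjOn φ ↑X := h3.mono (by simp [Finset.inter_eq_right.mpr hXV])
  obtain ⟨ψ, hψ1, hψ2, hψ3⟩ := extend_map φ X S A h3' Finset.sdiff_disjoint hA (by
    intro z hz x hx hxz
    have hxV := hXV hx
    rw [mem_vertexSet'] at hxV
    obtain ⟨E, hE, hxE⟩ := hxV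
    have hD := (hG' _ (h4 E hE)).2.1
    refine Finset.disjoint_left.mp hD ?_ hz
    rw [← hxz]
    exact Finset.mem_image_of_mem φ (Finset.mem_inter.mpr ⟨hxE, hx⟩))
  have hψX : ∀ x ∈ X, ψ x = φ x := fun x hx => hψ1 x (Finset.mem_sdiff.mp hx).2
  -- the private vertex outside the cross-cut
  have hd : ∀ E : Finset α, ∃ d : Finset α, E ∈ H → ∃ x, d = {x} ∧ x ∈ E ∧ x ∉ S ∧ vdeg H x = 1 := by
    intro E
    by_cases hE : E ∈ H
    · have hlt : (E ∩ S).card < (E.filter fun v => vdeg H v = 1).card := by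
        have := hS E hE; have := h2 E hE; omega
      obtain ⟨x, hx, hx2⟩ := Finset.exists_mem_notMem_of_card_lt_card hlt
      rw [Finset.mem_filter] at hx
      refine ⟨{x}, fun _ => ⟨x, rfl, hx.1, fun h => hx2 (Finset.mem_inter.mpr ⟨hx.1, h⟩), hx.2⟩⟩
    · exact ⟨∅, fun h => absurd h hE⟩
  choose P hP using hd
  set X2 := vertexSet H \ H.biUnion P with hX2
  have hX2V : X2 ⊆ vertexSet H := Finset.sdiff_subset
  have hEX2 : ∀ E ∈ H, E ∩ X2 = E \ P E := by
    intro E hE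
    ext v
    simp only [hX2, Finset.mem_inter, Finset.mem_sdiff, Finset.mem_biUnion]
    constructor
    · rintro ⟨h, _, h3⟩
      exact ⟨h, fun hh => h3 ⟨E, hE, hh⟩⟩
    · rintro ⟨h, h3⟩
      refine ⟨h, subset_vertexSet H E hE h, ?_⟩
      rintro ⟨E', hE', hv⟩
      obtain ⟨x, hx1, hx2, hx3, hx4⟩ := hP E' hE'
      rw [hx1, Finset.mem_singleton] at hv
      subst hv
      have he := eq_of_vdeg_one H v hx4 E E' hE hE' h hx2
      apply h3
      rw [he, hx1]; simp
  refine complete_embed k s F hu H hH.2 hs X2 hX2V ψ (hψ2.mono ?_) ?_ ?_ hF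
  · intro v hv
    have := hX2V hv
    rw [Finset.mem_coe, Finset.mem_union, hXdef, Finset.mem_sdiff]
    tauto
  · intro E hE E' hE' hEE v hv
    rw [Finset.mem_inter] at hv
    have : v ∈ E ∩ X2 := by
      rw [hEX2 E hE, Finset.mem_sdiff]
      refine ⟨hv.1, fun h => ?_⟩
      obtain ⟨x, hx1, hx2, hx3, hx4⟩ := hP E hE
      rw [hx1, Finset.mem_singleton] at h
      subst h
      exact hEE (eq_of_vdeg_one H v hx4 E E' hE hE' hv.1 hv.2)
    exact (Finset.mem_inter.mp this).2
  · intro E hE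
    obtain ⟨x, hx1, hx2, hx3, hx4⟩ := hP E hE
    obtain ⟨c, hcS⟩ := Finset.card_eq_one.mp (hS E hE)
    have hcE : c ∈ E ∩ S := by rw [hcS]; simp
    rw [Finset.mem_inter] at hcE
    have hcA : ψ c ∈ A := by rw [← hψ3]; exact Finset.mem_image_of_mem ψ hcE.2
    obtain ⟨hDc, hDA, hDu⟩ := hG' _ (h4 E hE)
    have hxX : x ∈ E ∩ X := by rw [hEX E hE]; exact Finset.mem_sdiff.mpr ⟨hx2, hx3⟩
    have hxD : φ x ∈ (E ∩ X).image φ := Finset.mem_image_of_mem φ hxX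
    have himg : (E ∩ X2).image ψ = insert (ψ c) (((E ∩ X).image φ).erase (φ x)) := by
      ext z
      rw [hEX2 E hE, hx1]
      simp only [Finset.mem_image, Finset.mem_insert, Finset.mem_erase, Finset.mem_sdiff,
        Finset.mem_singleton]
      constructor
      · rintro ⟨a, ⟨haE, hax⟩, rfl⟩
        by_cases haS : a ∈ S
        · left
          have : a ∈ E ∩ S := Finset.mem_inter.mpr ⟨haE, haS⟩
          rw [hcS, Finset.mem_singleton] at this
          rw [this]
        · right
          have haX : a ∈ E ∩ X := by rw [hEX E hE]; exact Finset.mem_sdiff.mpr ⟨haE, haS⟩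
          have haX' := (Finset.mem_inter.mp haX).2
          rw [hψX a haX']
          exact ⟨fun h => hax (h3' haX' (Finset.mem_inter.mp hxX).2 h), a, haX, rfl⟩
      · rintro (rfl | ⟨hzx, a, haX, rfl⟩)
        · exact ⟨c, ⟨hcE.1, fun h => hx3 (h ▸ hcE.2)⟩, rfl⟩
        · have haX' := Finset.mem_inter.mp haX
          exact ⟨a, ⟨haX'.1, fun h => hzx (h ▸ rfl)⟩, hψX a haX'.2⟩
    rw [himg]
    apply good_of_uDeg
    · intro E' hE'
      have hn : ψ c ∉ ((E ∩ X).image φ).erase (φ x) := fun h =>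
        Finset.disjoint_left.mp hDA (Finset.mem_of_mem_erase h) hcA
      rw [Finset.card_insert_of_notMem hn, Finset.card_erase_of_mem hxD, hDc, hu E' hE']
      have : 0 < ((E ∩ X).image φ).card := Finset.card_pos.mpr ⟨_, hxD⟩
      omega
    · exact hDu _ hcA _ hxD

/-! ### Structure of an `H`-free family -/

theorem peel_card (r s : ℕ) (G U : Finset (Finset ℕ)) (hu : ∀ E ∈ G, E.card = r)
    (hc : ∀ G' ⊆ G, Core s G' → G' = ∅) (hU : ∀ E ∈ G, ∀ x ∈ E, E.erase x ∈ U) :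
    G.card ≤ s * U.card := by
  obtain ⟨D, hD, hf⟩ := peel r s G.card G le_rfl hu hc
  refine Finset.card_le_mul_card_image_of_maps_to (f := D) ?_ s (fun T _ => hf T)
  intro E hE
  obtain ⟨x, hx, h⟩ := hD E hE
  rw [h]; exact hU E hE x hx

noncomputable def goodSets (n k s : ℕ) (F : Finset (Finset ℕ)) : Finset (Finset ℕ) :=
  ((vtx n).powersetCard (k - 2)).filter (fun T => Good s F T)

noncomputable def Bset (n k s : ℕ) (F : Finset (Finset ℕ)) : Finset (Finset ℕ × ℕ) :=
  ((vtx n).powersetCard (k - 2) ×ˢ vtx n).filter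
    (fun p => p.2 ∉ p.1 ∧ ¬ Good s F p.1 ∧ s ≤ uDeg F (insert p.2 p.1))

noncomputable def Pot (n k : ℕ) (b : Finset (Finset ℕ × ℕ)) : Finset (Finset ℕ) :=
  ((vtx n).powersetCard k).filter
    (fun E => ∃ v ∈ E, ∀ u ∈ E.erase v, ((E.erase v).erase u, v) ∈ b)

noncomputable def fib (n : ℕ) (b : Finset (Finset ℕ × ℕ)) (T : Finset ℕ) : Finset ℕ :=
  (vtx n).filter (fun v => (T, v) ∈ b)

theorem card_vtx (n : ℕ) : (vtx n).card = n := by simp [vtx]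

theorem good_count {α : Type} [DecidableEq α] (n k s : ℕ) (H : Finset (Finset α))
    (hH : IsKTree k H) (h2 : TwoContractible H)
    (hs : (vertexSet H).card < s) (F : Finset (Finset ℕ)) (hu : ∀ E ∈ F, E.card = k)
    (hF : HFree H F) : (goodSets n k s F).card ≤ s * n.choose (k - 3) := by
  have h := peel_card (k - 2) s (goodSets n k s F) ((vtx n).powersetCard (k - 3)) ?_ ?_ ?_
  · rwa [Finset.card_powersetCard, card_vtx] at h
  · intro E hE
    exact (Finset.mem_powersetCard.mp (Finset.mem_filter.mp hE).1).2
  · intro G' hG' hc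
    refine nocore2 k s H hH h2 hs F hu hF G' ?_ hc
    intro T hT
    have := Finset.mem_filter.mp (hG' hT)
    exact ⟨(Finset.mem_powersetCard.mp this.1).2, this.2⟩
  · intro E hE x hx
    have := Finset.mem_powersetCard.mp (Finset.mem_filter.mp hE).1
    rw [Finset.mem_powersetCard]
    refine ⟨(Finset.erase_subset _ _).trans this.1, ?_⟩
    rw [Finset.card_erase_of_mem hx, this.2]; omega

theorem not_good_cover (s : ℕ) (F : Finset (Finset ℕ)) (T : Finset ℕ) (h : ¬ Good s F T) :
    ∃ W : Finset ℕ, W.card < s ∧ ∀ G ∈ F, T ⊆ G → ∃ w ∈ W, w ∈ G ∧ w ∉ T := by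
  unfold Good at h
  push Not at h
  obtain ⟨W, hW, hG⟩ := h
  refine ⟨W, hW, fun G hGF hT => ?_⟩
  have := hG G hGF hT
  rw [Finset.not_disjoint_iff] at this
  obtain ⟨w, h1, h2⟩ := this
  rw [Finset.mem_sdiff] at h1
  exact ⟨w, h2, h1.1, h1.2⟩

theorem left_count {α : Type} [DecidableEq α] (n k s : ℕ) (hk : 4 ≤ k) (H : Finset (Finset α))
    (hH : IsKTree k H) (h2 : TwoContractible H)
    (hs : (vertexSet H).card < s) (F : Finset (Finset ℕ)) (hFn : F ⊆ (vtx n).powersetCard k)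
    (hF : HFree H F) :
    (F \ Pot n k (Bset n k s F)).card ≤
      (s * n.choose (k - 3)) * (n * s) + n.choose (k - 2) * (s * s + s * s) := by
  have hu : ∀ E ∈ F, E.card = k := fun E hE => (Finset.mem_powersetCard.mp (hFn hE)).2
  have hv : ∀ E ∈ F, E ⊆ vtx n := fun E hE => (Finset.mem_powersetCard.mp (hFn hE)).1
  obtain ⟨D, hD, hf⟩ := peel k s F.card F le_rfl hu (nocore1 k s H hH hs F hu hF)
  have hWex : ∀ T : Finset ℕ, ∃ W : Finset ℕ, ¬ Good s F T → W.card < s ∧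
      ∀ G ∈ F, T ⊆ G → ∃ w ∈ W, w ∈ G ∧ w ∉ T := by
    intro T
    by_cases h : Good s F T
    · exact ⟨∅, fun h' => absurd h h'⟩
    · obtain ⟨W, hW⟩ := not_good_cover s F T h
      exact ⟨W, fun _ => hW⟩
  choose W hW using hWex
  set NG := ((vtx n).powersetCard (k - 2)).filter (fun T => ¬ Good s F T) with hNG
  set L1 := (goodSets n k s F).biUnion
    (fun T => (vtx n).biUnion (fun u => F.filter (fun E => D E = insert u T))) with hL1
  set L2 := NG.biUnion (fun T =>
    (W T).biUnion (fun v => if uDeg F (insert v T) < s then F.filter (fun E => insert v T ⊆ E)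
      else ∅) ∪
    (W T).biUnion (fun u => F.filter (fun E => D E = insert u T))) with hL2
  have hsub : F \ Pot n k (Bset n k s F) ⊆ L1 ∪ L2 := by
    intro E hE
    rw [Finset.mem_sdiff] at hE
    obtain ⟨hEF, hEP⟩ := hE
    obtain ⟨v, hvE, hDE⟩ := hD E hEF
    have hne : ∃ u ∈ E.erase v, ((E.erase v).erase u, v) ∉ Bset n k s F := by
      by_contra hcon
      push Not at hcon
      exact hEP (Finset.mem_filter.mpr ⟨hFn hEF, v, hvE, hcon⟩)
    obtain ⟨u, huE, hnb⟩ := hne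
    set T := (E.erase v).erase u with hT
    have hTu : insert u T = E.erase v := Finset.insert_erase huE
    have hTE : T ⊆ E := (Finset.erase_subset _ _).trans (Finset.erase_subset _ _)
    have hTm : T ∈ (vtx n).powersetCard (k - 2) := by
      rw [Finset.mem_powersetCard]
      refine ⟨hTE.trans (hv E hEF), ?_⟩
      rw [hT, Finset.card_erase_of_mem huE, Finset.card_erase_of_mem hvE, hu E hEF]; omega
    have hvT : v ∉ T := fun h => by
      rw [hT, Finset.mem_erase, Finset.mem_erase] at h; exact h.2.1 rfl
    have huE' : u ∈ E := Finset.mem_of_mem_erase huE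
    rw [Finset.mem_union]
    by_cases hg : Good s F T
    · left
      rw [hL1, Finset.mem_biUnion]
      refine ⟨T, Finset.mem_filter.mpr ⟨hTm, hg⟩, ?_⟩
      rw [Finset.mem_biUnion]
      exact ⟨u, hv E hEF huE', Finset.mem_filter.mpr ⟨hEF, by rw [hDE, hTu]⟩⟩
    · right
      rw [hL2, Finset.mem_biUnion]
      refine ⟨T, Finset.mem_filter.mpr ⟨hTm, hg⟩, ?_⟩
      have hlight : uDeg F (insert v T) < s := by
        by_contra hcon
        apply hnb
        refine Finset.mem_filter.mpr ⟨Finset.mem_product.mpr ⟨hTm, hv E hEF hvE⟩, hvT, hg, ?_⟩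
        exact not_lt.mp hcon
      obtain ⟨w, hwW, hwE, hwT⟩ := (hW T hg).2 E hEF hTE
      have hwuv : w = v ∨ w = u := by
        by_contra hcon
        push Not at hcon
        apply hwT
        rw [hT, Finset.mem_erase, Finset.mem_erase]
        exact ⟨hcon.2, hcon.1, hwE⟩
      rw [Finset.mem_union, Finset.mem_biUnion, Finset.mem_biUnion]
      rcases hwuv with rfl | rfl
      · left
        refine ⟨w, hwW, ?_⟩
        rw [if_pos hlight, Finset.mem_filter]
        exact ⟨hEF, Finset.insert_subset hvE hTE⟩
      · right
        exact ⟨w, hwW, Finset.mem_filter.mpr ⟨hEF, by rw [hDE, hTu]⟩⟩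
  refine (Finset.card_le_card hsub).trans ((Finset.card_union_le _ _).trans ?_)
  refine Nat.add_le_add ?_ ?_
  · refine (Finset.card_biUnion_le_card_mul _ _ (n * s) ?_).trans
      (Nat.mul_le_mul_right _ (good_count n k s H hH h2 hs F hu hF))
    intro T _
    refine (Finset.card_biUnion_le_card_mul _ _ s ?_).trans (by rw [card_vtx])
    intro u _
    exact hf _
  · refine (Finset.card_biUnion_le_card_mul _ _ (s * s + s * s) ?_).trans
      (Nat.mul_le_mul_right _ ?_)
    · intro T hT
      have hg := (Finset.mem_filter.mp hT).2
      have hWs := (hW T hg).1.le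
      refine (Finset.card_union_le _ _).trans (Nat.add_le_add ?_ ?_)
      · refine (Finset.card_biUnion_le_card_mul _ _ s ?_).trans (Nat.mul_le_mul_right _ hWs)
        intro v _
        by_cases h : uDeg F (insert v T) < s
        · rw [if_pos h]; exact h.le
        · rw [if_neg h]; simp
      · refine (Finset.card_biUnion_le_card_mul _ _ s ?_).trans (Nat.mul_le_mul_right _ hWs)
        intro u _
        exact hf _
    · refine (Finset.card_filter_le _ _).trans ?_
      rw [Finset.card_powersetCard, card_vtx]

theorem fib_card (n k s : ℕ) (hk : 4 ≤ k) (hs : 0 < s) (F : Finset (Finset ℕ))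
    (hu : ∀ E ∈ F, E.card = k) (T : Finset ℕ) : (fib n (Bset n k s F) T).card ≤ s := by
  by_cases hne : (fib n (Bset n k s F) T) = ∅
  · rw [hne]; simp
  obtain ⟨v0, hv0⟩ := Finset.nonempty_iff_ne_empty.mpr hne
  have h0 := (Finset.mem_filter.mp (Finset.mem_filter.mp hv0).2)
  simp only [Finset.mem_product, Finset.mem_powersetCard] at h0
  obtain ⟨⟨⟨-, hTc⟩, -⟩, -, hg, -⟩ := h0
  obtain ⟨W, hW, hcov⟩ := not_good_cover s F T hg
  refine (Finset.card_le_card ?_).trans hW.le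
  intro v hv
  have h1 := (Finset.mem_filter.mp (Finset.mem_filter.mp hv).2)
  simp only [Finset.mem_product, Finset.mem_powersetCard] at h1
  obtain ⟨-, hvT, -, hdeg⟩ := h1
  by_contra hvW
  obtain ⟨G, hGF, hTG, hd⟩ := good_of_uDeg s F (insert v T) (fun E hE => by
    rw [Finset.card_insert_of_notMem hvT, hu E hE, hTc]; omega) hdeg W hW
  obtain ⟨w, hwW, hwG, hwT⟩ := hcov G hGF ((Finset.subset_insert _ _).trans hTG)
  refine Finset.disjoint_left.mp hd (Finset.mem_sdiff.mpr ⟨hwG, ?_⟩) hwW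
  rw [Finset.mem_insert]
  rintro (rfl | h)
  · exact hvW hwW
  · exact hwT h

theorem Bset_card (n k s : ℕ) (hk : 4 ≤ k) (hs : 0 < s) (F : Finset (Finset ℕ))
    (hu : ∀ E ∈ F, E.card = k) : (Bset n k s F).card ≤ s * n.choose (k - 2) := by
  have h := Finset.card_le_mul_card_image_of_maps_to (s := Bset n k s F)
    (t := (vtx n).powersetCard (k - 2)) (f := Prod.fst) ?_ s ?_
  · rwa [Finset.card_powersetCard, card_vtx] at h
  · intro p hp
    exact (Finset.mem_product.mp (Finset.mem_filter.mp hp).1).1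
  · intro T _
    refine le_trans ?_ (fib_card n k s hk hs F hu T)
    refine (Finset.card_le_card (t := (fib n (Bset n k s F) T).image (fun v => (T, v))) ?_).trans
      Finset.card_image_le
    rintro ⟨T', v⟩ hp
    rw [Finset.mem_filter] at hp
    obtain ⟨hp, hT'⟩ := hp
    simp only at hT'
    subst hT'
    rw [Finset.mem_image]
    exact ⟨v, Finset.mem_filter.mpr
      ⟨(Finset.mem_product.mp (Finset.mem_filter.mp hp).1).2, hp⟩, rfl⟩

noncomputable def cen (n : ℕ) (b : Finset (Finset ℕ × ℕ)) (D : Finset ℕ) : Finset ℕ :=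
  (vtx n).filter (fun v => v ∉ D ∧ ∀ u ∈ D, (D.erase u, v) ∈ b)

theorem many_centers {α : Type} [DecidableEq α] (n k s : ℕ) (hk : 4 ≤ k) (H : Finset (Finset α))
    (hH : IsKTree k H) (h2 : TwoContractible H)
    (hs : (vertexSet H).card < s) (S : Finset α) (hS : IsCrosscut H S)
    (F : Finset (Finset ℕ)) (hu : ∀ E ∈ F, E.card = k) (hF : HFree H F) :
    (((vtx n).powersetCard (k - 1)).filter
      (fun D => S.card ≤ (cen n (Bset n k s F) D).card)).card ≤
      s * (n.choose (k - 2) * 2 ^ s) := by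
  set b := Bset n k s F with hb
  set DD : Finset ℕ → Finset (Finset ℕ) := fun A =>
    ((vtx n).powersetCard (k - 1)).filter (fun D => A ⊆ cen n b D) with hDD
  set TT : Finset ℕ → Finset (Finset ℕ) := fun A =>
    ((vtx n).powersetCard (k - 2)).filter (fun T => A ⊆ fib n b T) with hTT
  set PA := (vtx n).powersetCard S.card with hPA
  have hcount : ∀ A ∈ PA, (DD A).card ≤ s * (TT A).card := by
    intro A hA
    rw [hPA, Finset.mem_powersetCard] at hA
    refine peel_card (k - 1) s _ _ ?_ ?_ ?_
    · intro D hD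
      exact (Finset.mem_powersetCard.mp (Finset.mem_filter.mp hD).1).2
    · intro G' hG' hc
      refine nocore3 k s (by omega) H hH h2 hs S hS F hu hF A hA.2.symm G' ?_ hc
      intro D hD
      have hD' := Finset.mem_filter.mp (hG' hD)
      refine ⟨(Finset.mem_powersetCard.mp hD'.1).2, ?_, ?_⟩
      · rw [Finset.disjoint_left]
        intro v hv hvA
        exact (Finset.mem_filter.mp (hD'.2 hvA)).2.1 hv
      · intro v hvA u huD
        have := (Finset.mem_filter.mp (hD'.2 hvA)).2.2 u huD
        exact (Finset.mem_filter.mp this).2.2.2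
    · intro D hD x hx
      have hD' := Finset.mem_filter.mp hD
      have hD2 := Finset.mem_powersetCard.mp hD'.1
      refine Finset.mem_filter.mpr ⟨Finset.mem_powersetCard.mpr
        ⟨(Finset.erase_subset _ _).trans hD2.1, ?_⟩, ?_⟩
      · rw [Finset.card_erase_of_mem hx, hD2.2]; omega
      · intro v hv
        have := Finset.mem_filter.mp (hD'.2 hv)
        exact Finset.mem_filter.mpr ⟨this.1, this.2.2 x hx⟩
  have hsub : ((vtx n).powersetCard (k - 1)).filter (fun D => S.card ≤ (cen n b D).card) ⊆
      PA.biUnion DD := by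
    intro D hD
    rw [Finset.mem_filter] at hD
    obtain ⟨A, hA1, hA2⟩ := Finset.exists_subset_card_eq hD.2
    rw [Finset.mem_biUnion]
    refine ⟨A, Finset.mem_powersetCard.mpr ⟨hA1.trans (Finset.filter_subset _ _), hA2⟩, ?_⟩
    exact Finset.mem_filter.mpr ⟨hD.1, hA1⟩
  calc _ ≤ (PA.biUnion DD).card := Finset.card_le_card hsub
    _ ≤ ∑ A ∈ PA, (DD A).card := Finset.card_biUnion_le
    _ ≤ ∑ A ∈ PA, s * (TT A).card := Finset.sum_le_sum hcount
    _ = s * ∑ A ∈ PA, (TT A).card := by rw [Finset.mul_sum]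
    _ = s * ∑ T ∈ (vtx n).powersetCard (k - 2), (PA.filter (fun A => A ⊆ fib n b T)).card := by
        congr 1
        exact Finset.sum_card_bipartiteAbove_eq_sum_card_bipartiteBelow
          (fun A T => A ⊆ fib n b T)
    _ ≤ s * ∑ T ∈ (vtx n).powersetCard (k - 2), 2 ^ s := by
        refine Nat.mul_le_mul_left _ (Finset.sum_le_sum ?_)
        intro T _
        have h1 : PA.filter (fun A => A ⊆ fib n b T) ⊆ (fib n b T).powerset := by
          intro A hA
          exact Finset.mem_powerset.mpr (Finset.mem_filter.mp hA).2
        refine (Finset.card_le_card h1).trans ?_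
        rw [Finset.card_powerset]
        exact Nat.pow_le_pow_right (by norm_num) (fib_card n k s hk (by omega) F hu T)
    _ = s * (n.choose (k - 2) * 2 ^ s) := by
        rw [Finset.sum_const, Finset.card_powersetCard, card_vtx, smul_eq_mul]

theorem pot_card {α : Type} [DecidableEq α] (n k s : ℕ) (hk : 4 ≤ k) (H : Finset (Finset α))
    (hH : IsKTree k H) (h2 : TwoContractible H)
    (hs : (vertexSet H).card < s) (S : Finset α) (hS : IsCrosscut H S)
    (F : Finset (Finset ℕ)) (hu : ∀ E ∈ F, E.card = k) (hF : HFree H F) :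
    (Pot n k (Bset n k s F)).card ≤
      (S.card - 1) * n.choose (k - 1) + s * (n.choose (k - 2) * 2 ^ s) * s := by
  have hmc := many_centers n k s hk H hH h2 hs S hS F hu hF
  set b := Bset n k s F with hb
  have hsub : Pot n k b ⊆ ((vtx n).powersetCard (k - 1)).biUnion
      (fun D => (cen n b D).image (fun v => insert v D)) := by
    intro E hE
    obtain ⟨hE1, v, hvE, hvb⟩ := Finset.mem_filter.mp hE
    rw [Finset.mem_powersetCard] at hE1
    rw [Finset.mem_biUnion]
    refine ⟨E.erase v, Finset.mem_powersetCard.mpr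
      ⟨(Finset.erase_subset _ _).trans hE1.1, ?_⟩, ?_⟩
    · rw [Finset.card_erase_of_mem hvE, hE1.2]
    · rw [Finset.mem_image]
      exact ⟨v, Finset.mem_filter.mpr ⟨hE1.1 hvE, Finset.notMem_erase _ _, hvb⟩,
        Finset.insert_erase hvE⟩
  have hcen : ∀ D ∈ (vtx n).powersetCard (k - 1), (cen n b D).card ≤
      (S.card - 1) + (if S.card ≤ (cen n b D).card then s else 0) := by
    intro D hD
    rw [Finset.mem_powersetCard] at hD
    by_cases h : S.card ≤ (cen n b D).card
    · rw [if_pos h]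
      have hne : D.Nonempty := Finset.card_pos.mp (by omega)
      obtain ⟨u, hu'⟩ := hne
      have : cen n b D ⊆ fib n b (D.erase u) := by
        intro v hv
        have := Finset.mem_filter.mp hv
        exact Finset.mem_filter.mpr ⟨this.1, this.2.2 u hu'⟩
      have := (Finset.card_le_card this).trans (fib_card n k s hk (by omega) F hu (D.erase u))
      omega
    · rw [if_neg h]; omega
  calc _ ≤ _ := Finset.card_le_card hsub
    _ ≤ ∑ D ∈ (vtx n).powersetCard (k - 1), ((cen n b D).image (fun v => insert v D)).card :=
        Finset.card_biUnion_le
    _ ≤ ∑ D ∈ (vtx n).powersetCard (k - 1),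
          ((S.card - 1) + (if S.card ≤ (cen n b D).card then s else 0)) :=
        Finset.sum_le_sum (fun D hD => Finset.card_image_le.trans (hcen D hD))
    _ = (S.card - 1) * n.choose (k - 1) + (((vtx n).powersetCard (k - 1)).filter
          (fun D => S.card ≤ (cen n b D).card)).card * s := by
        rw [Finset.sum_add_distrib, Finset.sum_const, Finset.card_powersetCard, card_vtx,
          smul_eq_mul, ← Finset.sum_filter, Finset.sum_const, smul_eq_mul, Nat.mul_comm]
    _ ≤ _ := by
        exact Nat.add_le_add_left (Nat.mul_le_mul_right _ hmc) _

/-! ### Counting -/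

theorem small_subsets {β : Type} [DecidableEq β] (U : Finset β) (m : ℕ) :
    (U.powerset.filter (fun L => L.card ≤ m)).card ≤ (U.card + 1) ^ m := by
  induction m with
  | zero =>
    have : U.powerset.filter (fun L => L.card ≤ 0) ⊆ {∅} := by
      intro L hL
      have := (Finset.mem_filter.mp hL).2
      rw [Finset.mem_singleton]
      exact Finset.card_eq_zero.mp (Nat.le_zero.mp this)
    simpa using Finset.card_le_card this
  | succ m ih =>
    set Q := U.powerset.filter (fun L => L.card ≤ m) with hQ
    have hsub : U.powerset.filter (fun L => L.card ≤ m + 1) ⊆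
        Q ∪ (U ×ˢ Q).image (fun p => insert p.1 p.2) := by
      intro L hL
      obtain ⟨h1, h2⟩ := Finset.mem_filter.mp hL
      rw [Finset.mem_powerset] at h1
      rw [Finset.mem_union]
      by_cases h : L.card ≤ m
      · left; exact Finset.mem_filter.mpr ⟨Finset.mem_powerset.mpr h1, h⟩
      · right
        have hne : L.Nonempty := Finset.card_pos.mp (by omega)
        obtain ⟨x, hx⟩ := hne
        rw [Finset.mem_image]
        refine ⟨(x, L.erase x), Finset.mem_product.mpr ⟨h1 hx, Finset.mem_filter.mpr
          ⟨Finset.mem_powerset.mpr ((Finset.erase_subset _ _).trans h1), ?_⟩⟩,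
          Finset.insert_erase hx⟩
        simp only
        rw [Finset.card_erase_of_mem hx]; omega
    refine (Finset.card_le_card hsub).trans ((Finset.card_union_le _ _).trans ?_)
    have h3 : ((U ×ˢ Q).image (fun p => insert p.1 p.2)).card ≤ U.card * Q.card :=
      Finset.card_image_le.trans (by rw [Finset.card_product])
    calc _ ≤ Q.card + U.card * Q.card := Nat.add_le_add_left h3 _
      _ = (U.card + 1) * Q.card := by ring
      _ ≤ (U.card + 1) * (U.card + 1) ^ m := Nat.mul_le_mul_left _ ih
      _ = _ := by ring

theorem forb_count {α : Type} [DecidableEq α] (n k s : ℕ) (hk : 4 ≤ k) (H : Finset (Finset α))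
    (hH : IsKTree k H) (h2 : TwoContractible H)
    (hs : (vertexSet H).card < s) (S : Finset α) (hS : IsCrosscut H S) :
    forb n k H ≤ (n.choose (k - 2) * n + 1) ^ (s * n.choose (k - 2)) *
      (n.choose k + 1) ^
        ((s * n.choose (k - 3)) * (n * s) + n.choose (k - 2) * (s * s + s * s)) *
      2 ^ ((S.card - 1) * n.choose (k - 1) + s * (n.choose (k - 2) * 2 ^ s) * s) := by
  set m1 := s * n.choose (k - 2) with hm1
  set m2 := (s * n.choose (k - 3)) * (n * s) + n.choose (k - 2) * (s * s + s * s) with hm2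
  set P0 := (S.card - 1) * n.choose (k - 1) + s * (n.choose (k - 2) * 2 ^ s) * s with hP0
  set U1 := (vtx n).powersetCard (k - 2) ×ˢ vtx n with hU1
  set U2 := (vtx n).powersetCard k with hU2
  set Q1 := (U1.powerset.filter (fun L => L.card ≤ m1)) with hQ1
  set Q2 := (U2.powerset.filter (fun L => L.card ≤ m2)) with hQ2
  have hsub : U2.powerset.filter (HFree H) ⊆ (Q1 ×ˢ Q2).biUnion (fun p =>
      if (Pot n k p.1).card ≤ P0 then (Pot n k p.1).powerset.image (fun R => p.2 ∪ R) else ∅) := by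
    intro F hF
    obtain ⟨hF1, hFf⟩ := Finset.mem_filter.mp hF
    rw [Finset.mem_powerset] at hF1
    have hu : ∀ E ∈ F, E.card = k := fun E hE => (Finset.mem_powersetCard.mp (hF1 hE)).2
    rw [Finset.mem_biUnion]
    refine ⟨(Bset n k s F, F \ Pot n k (Bset n k s F)), Finset.mem_product.mpr ⟨?_, ?_⟩, ?_⟩
    · exact Finset.mem_filter.mpr ⟨Finset.mem_powerset.mpr (Finset.filter_subset _ _),
        Bset_card n k s hk (by omega) F hu⟩
    · exact Finset.mem_filter.mpr ⟨Finset.mem_powerset.mpr (Finset.sdiff_subset.trans hF1),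
        left_count n k s hk H hH h2 hs F hF1 hFf⟩
    · simp only
      rw [if_pos (pot_card n k s hk H hH h2 hs S hS F hu hFf), Finset.mem_image]
      refine ⟨F ∩ Pot n k (Bset n k s F), Finset.mem_powerset.mpr Finset.inter_subset_right, ?_⟩
      ext E
      simp only [Finset.mem_union, Finset.mem_sdiff, Finset.mem_inter]
      tauto
  have hc1 : Q1.card ≤ (n.choose (k - 2) * n + 1) ^ m1 := by
    have := small_subsets U1 m1
    rwa [hU1, Finset.card_product, Finset.card_powersetCard, card_vtx] at this
  have hc2 : Q2.card ≤ (n.choose k + 1) ^ m2 := by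
    have := small_subsets U2 m2
    rwa [hU2, Finset.card_powersetCard, card_vtx] at this
  unfold forb
  refine (Finset.card_le_card hsub).trans
    ((Finset.card_biUnion_le_card_mul _ _ (2 ^ P0) ?_).trans ?_)
  · intro p _
    by_cases h : (Pot n k p.1).card ≤ P0
    · rw [if_pos h]
      refine Finset.card_image_le.trans ?_
      rw [Finset.card_powerset]
      exact Nat.pow_le_pow_right (by norm_num) h
    · rw [if_neg h]; simp
  · rw [Finset.card_product]
    exact Nat.mul_le_mul_right _ (Nat.mul_le_mul hc1 hc2)

theorem asymp (k : ℕ) (hk : 4 ≤ k) (C ε : ℝ) (hC : 0 < C) (hε : 0 < ε) :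
    ∃ n₀ : ℕ, ∀ n ≥ n₀, C * (n : ℝ) ^ (k - 2) * (Real.logb 2 ((n : ℝ) + 1) + 1) ≤
      ε * (n.choose (k - 1) : ℝ) := by
  set c : ℝ := 2 ^ (k - 1) * ((k - 1).factorial : ℝ) with hc
  have hcpos : 0 < c := by positivity
  have hlog2 : 0 < Real.log 2 := Real.log_pos (by norm_num)
  set δ : ℝ := Real.log 2 * (ε / (4 * C * c)) with hδ
  have hδpos : 0 < δ := by positivity
  have h1 := (Real.isLittleO_log_id_atTop.def hδpos)
  have h1' : ∀ᶠ n : ℕ in atTop, ‖Real.log ((n : ℝ) + 1)‖ ≤ δ * ‖id ((n : ℝ) + 1)‖ := by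
    have ht : Tendsto (fun n : ℕ => (n : ℝ) + 1) atTop atTop :=
      tendsto_atTop_add_const_right _ _ tendsto_natCast_atTop_atTop
    exact ht.eventually h1
  have h2 : ∀ᶠ n : ℕ in atTop, 2 * C * c / ε ≤ (n : ℝ) :=
    tendsto_natCast_atTop_atTop.eventually_ge_atTop _
  obtain ⟨n₀, hn₀⟩ := Filter.eventually_atTop.mp
    (h1'.and (h2.and (Filter.eventually_ge_atTop (2 * k))))
  refine ⟨n₀, fun n hn => ?_⟩
  obtain ⟨ha, hb, hcn⟩ := hn₀ n hn
  have hn1 : (1 : ℝ) ≤ n := by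
    have : 1 ≤ n := by omega
    exact_mod_cast this
  have hch : ((n : ℝ) / 2) ^ (k - 1) / ((k - 1).factorial : ℝ) ≤ (n.choose (k - 1) : ℝ) := by
    refine le_trans ?_ (Nat.pow_le_choose (α := ℝ) (k - 1) n)
    gcongr
    have : n ≤ 2 * (n + 1 - (k - 1)) := by omega
    have h' : (n : ℝ) ≤ 2 * ((n + 1 - (k - 1) : ℕ) : ℝ) := by exact_mod_cast this
    linarith
  have hch2 : ((n : ℝ) / 2) ^ (k - 1) / ((k - 1).factorial : ℝ) = (n : ℝ) ^ (k - 2) * (n / c) := by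
    have : k - 1 = (k - 2) + 1 := by omega
    rw [div_pow, hc, div_div]
    conv_lhs => rw [show (n : ℝ) ^ (k - 1) = (n : ℝ) ^ (k - 2) * n by rw [this, pow_succ]]
    rw [mul_div_assoc]
  have hlogb : Real.logb 2 ((n : ℝ) + 1) ≤ ε / (4 * C * c) * (2 * n) := by
    rw [Real.logb, div_le_iff₀ hlog2]
    have h3 : Real.log ((n : ℝ) + 1) ≤ δ * ((n : ℝ) + 1) := by
      refine (le_abs_self _).trans ?_
      rw [Real.norm_eq_abs, Real.norm_eq_abs, id, abs_of_pos (by positivity : (0:ℝ) < (n : ℝ) + 1)] at ha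
      exact ha
    refine h3.trans ?_
    have : δ * ((n : ℝ) + 1) ≤ δ * (2 * n) := by
      apply mul_le_mul_of_nonneg_left _ hδpos.le; linarith
    refine this.trans (le_of_eq ?_)
    rw [hδ]; ring
  have hone : (1 : ℝ) ≤ ε / (2 * C * c) * n := by
    rw [div_le_iff₀ hε] at hb
    rw [div_mul_eq_mul_div, le_div_iff₀ (by positivity)]
    linarith
  calc C * (n : ℝ) ^ (k - 2) * (Real.logb 2 ((n : ℝ) + 1) + 1)
      ≤ C * (n : ℝ) ^ (k - 2) * (ε / (4 * C * c) * (2 * n) + ε / (2 * C * c) * n) := by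
        gcongr
    _ = ε * ((n : ℝ) ^ (k - 2) * (n / c)) := by
        field_simp
        ring
    _ ≤ ε * (n.choose (k - 1) : ℝ) := by
        rw [← hch2]
        gcongr

theorem upper {α : Type} [DecidableEq α] (k : ℕ) (hk : 4 ≤ k) (H : Finset (Finset α))
    (hH : IsKTree k H) (h2 : TwoContractible H) (S : Finset α) (hS : IsCrosscut H S)
    (hS1 : 1 ≤ S.card) (ε : ℝ) (hε : 0 < ε) :
    ∃ n₀ : ℕ, ∀ n ≥ n₀,
      (forb n k H : ℝ) ≤ (2 : ℝ) ^ (((S.card : ℝ) - 1 + ε) * (n.choose (k - 1) : ℝ)) := by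
  obtain ⟨s, hs⟩ : ∃ s, (vertexSet H).card < s := ⟨_, Nat.lt_succ_self _⟩
  have hs0 : 0 < s := by omega
  set C : ℕ := k * (s + 3 * (s * s)) + s * 2 ^ s * s with hC
  have hCpos : 0 < C := by
    have : 0 < k * (s + 3 * (s * s)) := by positivity
    omega
  obtain ⟨n₀, hn₀⟩ := asymp k hk C ε (by exact_mod_cast hCpos) hε
  refine ⟨n₀ + 1, fun n hn => ?_⟩
  have hfc := forb_count n k s hk H hH h2 (by omega) S hS
  have has := hn₀ n (by omega)
  have hc2 : n.choose (k - 2) ≤ n ^ (k - 2) := Nat.choose_le_pow _ _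
  have hc3 : n.choose (k - 3) ≤ n ^ (k - 3) := Nat.choose_le_pow _ _
  have hpw : n ^ (k - 3) * n = n ^ (k - 2) := by
    rw [← pow_succ]; congr 1; omega
  have hbase : ∀ j, n ^ j + 1 ≤ (n + 1) ^ (j + 1) := by
    intro j
    calc n ^ j + 1 ≤ (n + 1) ^ j + (n + 1) ^ j * n := by
            have h1 : n ^ j ≤ (n + 1) ^ j := Nat.pow_le_pow_left (by omega) j
            have h2 : 1 ≤ (n + 1) ^ j * n := Nat.mul_pos (by positivity) (by omega)
            omega
      _ = _ := by ring
  have hb1 : n.choose (k - 2) * n + 1 ≤ (n + 1) ^ k := by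
    have h1 : n.choose (k - 2) * n ≤ n ^ (k - 1) := by
      calc n.choose (k - 2) * n ≤ n ^ (k - 2) * n := Nat.mul_le_mul_right _ hc2
        _ = n ^ (k - 1) := by rw [← pow_succ]; congr 1; omega
    have h2 := hbase (k - 1)
    rw [show k - 1 + 1 = k by omega] at h2
    omega
  have hb2 : n.choose k + 1 ≤ (n + 1) ^ k := by
    have h1 := Nat.choose_le_pow n k
    have h2 : n ^ k + 1 ≤ (n + 1) ^ k := by
      have := Nat.pow_lt_pow_left (show n < n + 1 by omega) (show k ≠ 0 by omega)
      omega
    omega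
  set N := n ^ (k - 2) with hN
  have he1 : s * n.choose (k - 2) ≤ s * N := Nat.mul_le_mul_left _ hc2
  have he2 : (s * n.choose (k - 3)) * (n * s) + n.choose (k - 2) * (s * s + s * s) ≤
      3 * (s * s) * N := by
    calc _ ≤ (s * n ^ (k - 3)) * (n * s) + N * (s * s + s * s) := by gcongr
      _ = (s * s) * (n ^ (k - 3) * n) + N * (s * s + s * s) := by ring
      _ = _ := by rw [hpw]; ring
  have he3 : s * (n.choose (k - 2) * 2 ^ s) * s ≤ s * 2 ^ s * s * N := by
    calc _ ≤ s * (N * 2 ^ s) * s := by gcongr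
      _ = _ := by ring
  have hnat : forb n k H ≤ (n + 1) ^ (k * (s + 3 * (s * s)) * N) *
      2 ^ ((S.card - 1) * n.choose (k - 1) + s * 2 ^ s * s * N) := by
    refine hfc.trans (Nat.mul_le_mul ?_ (Nat.pow_le_pow_right (by norm_num)
      (Nat.add_le_add_left he3 _)))
    calc _ ≤ ((n + 1) ^ k) ^ (s * N) * ((n + 1) ^ k) ^ (3 * (s * s) * N) := by
          refine Nat.mul_le_mul ?_ ?_
          · exact (Nat.pow_le_pow_left hb1 _).trans (Nat.pow_le_pow_right (by positivity) he1)
          · exact (Nat.pow_le_pow_left hb2 _).trans (Nat.pow_le_pow_right (by positivity) he2)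
      _ = _ := by rw [← pow_mul, ← pow_mul, ← pow_add]; congr 1; ring
  have hreal : (forb n k H : ℝ) ≤ ((n : ℝ) + 1) ^ (k * (s + 3 * (s * s)) * N) *
      2 ^ ((S.card - 1) * n.choose (k - 1) + s * 2 ^ s * s * N) := by exact_mod_cast hnat
  refine hreal.trans ?_
  set l := Real.logb 2 ((n : ℝ) + 1) with hl
  have hl0 : 0 ≤ l := Real.logb_nonneg (by norm_num) (by linarith [Nat.cast_nonneg (α := ℝ) n])
  have hn2 : ((n : ℝ) + 1) = (2 : ℝ) ^ l := by
    rw [hl, Real.rpow_logb (by norm_num) (by norm_num) (by positivity)]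
  rw [hn2, ← Real.rpow_natCast, ← Real.rpow_natCast, ← Real.rpow_mul (by norm_num),
    ← Real.rpow_add (by norm_num)]
  apply Real.rpow_le_rpow_of_exponent_le (by norm_num)
  rw [hC] at has
  push_cast [Nat.cast_sub hS1] at has ⊢
  rw [hN]
  push_cast
  have hNn : (0 : ℝ) ≤ (n : ℝ) ^ (k - 2) := by positivity
  have hx1 : (0 : ℝ) ≤ (k * (s + 3 * (s * s)) : ℝ) * (n : ℝ) ^ (k - 2) :=
    mul_nonneg (by clear has; clear hNn; positivity) hNn
  have hx2 : (0 : ℝ) ≤ (s * 2 ^ s * s : ℝ) * (n : ℝ) ^ (k - 2) * l :=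
    mul_nonneg (mul_nonneg (by clear has; clear hNn; positivity) hNn) hl0
  nlinarith [has, hx1, hx2]

theorem lower {α : Type} [DecidableEq α] (k : ℕ) (hk : 4 ≤ k) (H : Finset (Finset α))
    (c : ℕ) (hmin : ∀ S : Finset α, IsCrosscut H S → c < S.card) (ε : ℝ) (hε : 0 < ε) :
    ∃ n₀ : ℕ, ∀ n ≥ n₀,
      (2 : ℝ) ^ (((c : ℝ) - ε) * (n.choose (k - 1) : ℝ)) ≤ (forb n k H : ℝ) := by
  obtain ⟨n₀, hn₀⟩ := asymp k hk ((c : ℝ) * c + 1) ε (by positivity) hε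
  refine ⟨n₀ + c + 1, fun n hn => ?_⟩
  set U := (vtx n).powersetCard k with hU
  set F0 := U.filter (fun E => (E ∩ vtx c).card = 1) with hF0
  have hfree : ∀ F ⊆ F0, HFree H F := by
    intro F hF K hK hcopy
    obtain ⟨φ, hφ, hKe⟩ := hcopy
    set S := (vertexSet H).filter (fun v => φ v ∈ vtx c) with hS
    have hcross : IsCrosscut H S := by
      intro E hE
      have hEV := subset_vertexSet H E hE
      have hin : E.image φ ∈ F0 := hF (hK (by rw [hKe]; exact Finset.mem_image_of_mem _ hE))
      have h1 := (Finset.mem_filter.mp hin).2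
      have h2 : (E ∩ S).image φ = E.image φ ∩ vtx c := by
        ext z
        simp only [hS, Finset.mem_image, Finset.mem_inter, Finset.mem_filter]
        constructor
        · rintro ⟨a, ⟨h, _, h'⟩, rfl⟩
          exact ⟨⟨a, h, rfl⟩, h'⟩
        · rintro ⟨⟨a, h, rfl⟩, h'⟩
          exact ⟨a, ⟨h, hEV h, h'⟩, rfl⟩
      rw [← h1, ← h2, Finset.card_image_of_injOn]
      refine hφ.mono ?_
      intro v hv
      rw [Finset.mem_coe, Finset.mem_inter] at hv
      exact hEV hv.1
    have hlt := hmin S hcross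
    have hle : S.card ≤ (vtx c).card := by
      refine Finset.card_le_card_of_injOn φ (fun v hv => (Finset.mem_filter.mp hv).2) ?_
      refine hφ.mono ?_
      intro v hv
      exact (Finset.mem_filter.mp hv).1
    rw [card_vtx] at hle
    omega
  have hforb : 2 ^ F0.card ≤ forb n k H := by
    rw [← Finset.card_powerset]
    unfold forb
    refine Finset.card_le_card ?_
    intro F hF
    rw [Finset.mem_powerset] at hF
    exact Finset.mem_filter.mpr ⟨Finset.mem_powerset.mpr (hF.trans (Finset.filter_subset _ _)),
      hfree F hF⟩
  have hcard : c * (n - c).choose (k - 1) ≤ F0.card := by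
    have hdis : Disjoint (vtx n \ vtx c) (vtx c) := Finset.sdiff_disjoint
    have hsubv : vtx c ⊆ vtx n := by
      unfold vtx; exact Finset.Icc_subset_Icc le_rfl (by omega)
    have hcc : (vtx c ×ˢ (vtx n \ vtx c).powersetCard (k - 1)).card =
        c * (n - c).choose (k - 1) := by
      rw [Finset.card_product, Finset.card_powersetCard, card_vtx,
        Finset.card_sdiff_of_subset hsubv, card_vtx, card_vtx]
    rw [← hcc]
    have hcap : ∀ v ∈ vtx c, ∀ D ∈ (vtx n \ vtx c).powersetCard (k - 1),
        insert v D ∩ vtx c = {v} ∧ insert v D \ vtx c = D := by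
      intro v hv D hD
      have hD1 := (Finset.mem_powersetCard.mp hD).1
      constructor
      · ext z
        simp only [Finset.mem_inter, Finset.mem_insert, Finset.mem_singleton]
        constructor
        · rintro ⟨h | h, h'⟩
          · exact h
          · exact absurd h' (Finset.mem_sdiff.mp (hD1 h)).2
        · rintro rfl; exact ⟨Or.inl rfl, hv⟩
      · ext z
        simp only [Finset.mem_sdiff, Finset.mem_insert]
        constructor
        · rintro ⟨h | h, h'⟩
          · exact absurd (h ▸ hv) h'
          · exact h
        · intro h; exact ⟨Or.inr h, (Finset.mem_sdiff.mp (hD1 h)).2⟩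
    refine Finset.card_le_card_of_injOn (fun p => insert p.1 p.2) ?_ ?_
    · rintro ⟨v, D⟩ hp
      rw [Finset.mem_coe, Finset.mem_product] at hp
      obtain ⟨hv, hD⟩ := hp
      simp only at hv hD
      have hD1 := Finset.mem_powersetCard.mp hD
      refine Finset.mem_filter.mpr ⟨Finset.mem_powersetCard.mpr ⟨?_, ?_⟩, ?_⟩
      · exact Finset.insert_subset (hsubv hv) (hD1.1.trans Finset.sdiff_subset)
      · rw [Finset.card_insert_of_notMem, hD1.2]
        · omega
        · exact fun h => (Finset.mem_sdiff.mp (hD1.1 h)).2 hv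
      · simp only
        rw [(hcap v hv D hD).1]; simp
    · rintro ⟨v, D⟩ hp ⟨v', D'⟩ hp' heq
      rw [Finset.mem_coe, Finset.mem_product] at hp hp'
      simp only at hp hp' heq
      have h1 := hcap v hp.1 D hp.2
      have h2 := hcap v' hp'.1 D' hp'.2
      rw [heq] at h1
      have e1 : v = v' := Finset.singleton_injective (h1.1.symm.trans h2.1)
      have e2 : D = D' := h1.2.symm.trans h2.2
      rw [e1, e2]
  have hstep : ∀ j ≤ c, n.choose (k - 1) ≤ (n - j).choose (k - 1) + j * n ^ (k - 2) := by
    intro j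
    induction j with
    | zero => intro _; simp
    | succ j ih =>
      intro hj
      have h1 := ih (by omega)
      have h2 : (n - j).choose (k - 1) = (n - (j + 1)).choose (k - 2) +
          (n - (j + 1)).choose (k - 1) := by
        have e1 : n - j = (n - (j + 1)) + 1 := by omega
        have e2 : k - 1 = (k - 2) + 1 := by omega
        rw [e1, e2, Nat.choose_succ_succ]
      have h3 : (n - (j + 1)).choose (k - 2) ≤ n ^ (k - 2) :=
        (Nat.choose_le_pow _ _).trans (Nat.pow_le_pow_left (by omega) _)
      have h4 : (j + 1) * n ^ (k - 2) = j * n ^ (k - 2) + n ^ (k - 2) := by ring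
      omega
  have hst := hstep c le_rfl
  have has := hn₀ n (by omega)
  have hl0 : 0 ≤ Real.logb 2 ((n : ℝ) + 1) :=
    Real.logb_nonneg (by norm_num) (by linarith [Nat.cast_nonneg (α := ℝ) n])
  have hfr : (2 : ℝ) ^ F0.card ≤ (forb n k H : ℝ) := by exact_mod_cast hforb
  refine le_trans ?_ hfr
  rw [← Real.rpow_natCast]
  apply Real.rpow_le_rpow_of_exponent_le (by norm_num)
  have hcr : (c : ℝ) * ((n - c).choose (k - 1) : ℝ) ≤ (F0.card : ℝ) := by exact_mod_cast hcard
  have hsr : (n.choose (k - 1) : ℝ) ≤ ((n - c).choose (k - 1) : ℝ) + c * (n : ℝ) ^ (k - 2) := by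
    exact_mod_cast hst
  have hx : ((c : ℝ) * c) * (n : ℝ) ^ (k - 2) ≤ ε * (n.choose (k - 1) : ℝ) := by
    refine le_trans ?_ has
    have hNn : (0 : ℝ) ≤ (n : ℝ) ^ (k - 2) := by positivity
    have h1 : ((c : ℝ) * c) * (n : ℝ) ^ (k - 2) ≤ ((c : ℝ) * c + 1) * (n : ℝ) ^ (k - 2) := by
      gcongr; linarith
    have h2 : (0 : ℝ) ≤ ((c : ℝ) * c + 1) * (n : ℝ) ^ (k - 2) := by positivity
    nlinarith
  have hc0 : (0 : ℝ) ≤ c := Nat.cast_nonneg c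
  nlinarith [mul_le_mul_of_nonneg_left hsr hc0]

/-- For `k ≥ 4` and `H` a 2-contractible `k`-tree with cross-cut number `σ`,
`forb(n,H) = 2^{(σ−1+o(1))·C(n,k−1)}`. -/
theorem stmt_0 {α : Type} [DecidableEq α] (k : ℕ) (hk : 4 ≤ k)
    (H : Finset (Finset α)) (hH : IsKTree k H) (h2 : TwoContractible H)
    (σ : ℕ) (hσ : IsCrosscutNumber H σ) :
    ∀ ε : ℝ, 0 < ε → ∃ n₀ : ℕ, ∀ n ≥ n₀,
      (2 : ℝ) ^ (((σ : ℝ) - 1 - ε) * (n.choose (k - 1) : ℝ)) ≤ (forb n k H : ℝ) ∧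
      (forb n k H : ℝ) ≤ (2 : ℝ) ^ (((σ : ℝ) - 1 + ε) * (n.choose (k - 1) : ℝ)) := by
  intro ε hε
  obtain ⟨⟨S, hS, hSc⟩, hmin⟩ := hσ
  have hne : ∃ E, E ∈ H := by
    obtain ⟨h, -⟩ := hH
    cases h with
    | single E => exact ⟨E, by simp⟩
    | grow E F _ _ _ _ => exact ⟨E, by simp⟩
  obtain ⟨E, hE⟩ := hne
  have hS1 : 1 ≤ S.card := by
    have h1 := hS E hE
    have h3 : (E ∩ S).card ≤ S.card := Finset.card_le_card Finset.inter_subset_right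
    omega
  have hmin' : ∀ S' : Finset α, IsCrosscut H S' → σ - 1 < S'.card := by
    intro S' hS'
    have : σ ≤ S'.card := hmin ⟨S', hS', rfl⟩
    omega
  obtain ⟨n₁, h₁⟩ := upper k hk H hH h2 S hS hS1 ε hε
  obtain ⟨n₂, h₂⟩ := lower k hk H (σ - 1) hmin' ε hε
  have hcast : ((σ - 1 : ℕ) : ℝ) = (σ : ℝ) - 1 := by
    rw [Nat.cast_sub (by omega)]; simp
  refine ⟨n₁ + n₂, fun n hn => ⟨?_, ?_⟩⟩
  · have := h₂ n (by omega)
    rwa [hcast] at this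
  · have := h₁ n (by omega)
    rwa [hSc] at this
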